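/- arXiv:2110.10961 — 2 statements merged into one kernel-verified Lean document; each statement's English description precedes it below -/
import Mathlib

section
/- Let l < 0 < u be real numbers. Then for every deterministic decision d ∈ {−1, 1}, the worst-case regret of the randomized minimax rule is strictly smaller than that of d: −l·u/(u−l) < sup over c ∈ [l,u] of (max(c,0) − c·I{d=1}). -/
/-!
For a fixed rule, regret is convex in the treatment effect, so over `[l, u]` it is largest at an
endpoint. As the treatment probability increases, regret at `u > 0` strictly decreases and regret at
`l < 0` strictly increases; the minimax probability `u / (u - l)` makes the two equal. Hence any
other probability does strictly worse at one of the endpoints. The deterministic decisions are the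
probabilities `0` and `1`, whereas `u / (u - l)` lies strictly between them.
-/

open Set

section ConvexOn

variable {𝕜 β : Type*} [Field 𝕜] [LinearOrder 𝕜] [IsStrictOrderedRing 𝕜]
  [AddCommGroup β] [LinearOrder β] [IsOrderedAddMonoid β] [Module 𝕜 β] [IsStrictOrderedModule 𝕜 β]

lemma isGreatest_image_Icc_of_convexOn {f : 𝕜 → β} {a b : 𝕜} (hf : ConvexOn 𝕜 (Icc a b) f)
    (hab : a ≤ b) : IsGreatest (f '' Icc a b) (max (f a) (f b)) := by
  have ha : a ∈ Icc a b := left_mem_Icc.2 hab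
  have hb : b ∈ Icc a b := right_mem_Icc.2 hab
  refine ⟨?_, forall_mem_image.2 fun c hc => hf.le_max_of_mem_Icc ha hb hc⟩
  rcases max_choice (f a) (f b) with h | h <;> rw [h]
  exacts [mem_image_of_mem f ha, mem_image_of_mem f hb]

end ConvexOn

/-- The expected regret, when the treatment effect is `c`, of the rule that treats (takes action
`1`) with probability `p`. The deterministic decisions `-1` and `1` are `p = 0` and `p = 1`. -/
def regret (p c : ℝ) : ℝ :=
  max c 0 - c * p

/-- The worst-case regret of treating with probability `p` when the treatment effect is only known
to lie in `[l, u]`. -/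
noncomputable def worstCaseRegret (l u p : ℝ) : ℝ :=
  sSup (regret p '' Icc l u)

/-- The treatment probability of the randomized minimax rule for effects in `[l, u]`, where
`l < 0 < u`. -/
noncomputable def minimaxProb (l u : ℝ) : ℝ :=
  u / (u - l)

section Regret

variable {l u p c : ℝ}

lemma convexOn_regret (p : ℝ) : ConvexOn ℝ univ (regret p) :=
  ((convexOn_id convex_univ).sup (convexOn_const 0 convex_univ)).sub
    ((LinearMap.mulRight ℝ p).concaveOn convex_univ)

lemma strictAnti_regret_of_pos (hc : 0 < c) : StrictAnti (regret · c) := fun _ _ h =>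
  sub_lt_sub_left (mul_lt_mul_of_pos_left h hc) _

lemma strictMono_regret_of_neg (hc : c < 0) : StrictMono (regret · c) := fun _ _ h =>
  sub_lt_sub_left (mul_lt_mul_of_neg_left h hc) _

lemma worstCaseRegret_eq_max (p : ℝ) (hlu : l ≤ u) :
    worstCaseRegret l u p = max (regret p l) (regret p u) :=
  (isGreatest_image_Icc_of_convexOn
    ((convexOn_regret p).subset (subset_univ _) (convex_Icc l u)) hlu).csSup_eq

lemma regret_minimaxProb_left (hl : l ≤ 0) :
    regret (minimaxProb l u) l = -l * u / (u - l) := by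
  rw [regret, minimaxProb, max_eq_right hl]
  ring

lemma regret_minimaxProb_right (hlu : l < u) (hu : 0 ≤ u) :
    regret (minimaxProb l u) u = -l * u / (u - l) := by
  have hsub : u - l ≠ 0 := sub_ne_zero.2 hlu.ne'
  rw [regret, minimaxProb, max_eq_left hu]
  field_simp
  ring

lemma worstCaseRegret_minimaxProb (hl : l < 0) (hu : 0 ≤ u) :
    worstCaseRegret l u (minimaxProb l u) = -l * u / (u - l) := by
  rw [worstCaseRegret_eq_max _ (hl.le.trans hu), regret_minimaxProb_left hl.le,
    regret_minimaxProb_right (hl.trans_le hu) hu, max_self]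

lemma minimaxProb_mem_Ioo (hl : l < 0) (hu : 0 < u) : minimaxProb l u ∈ Ioo 0 1 := by
  have hlu : 0 < u - l := by linarith
  exact ⟨div_pos hu hlu, (div_lt_one hlu).2 (by linarith)⟩

theorem stmt_6_general (hl : l < 0) (hu : 0 < u) (hp : p ≠ minimaxProb l u) :
    worstCaseRegret l u (minimaxProb l u) < worstCaseRegret l u p := by
  rw [worstCaseRegret_minimaxProb hl hu.le, worstCaseRegret_eq_max p (hl.trans hu).le, lt_max_iff]
  rcases hp.lt_or_gt with hlt | hgt
  · right
    rw [← regret_minimaxProb_right (hl.trans hu) hu.le]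
    exact strictAnti_regret_of_pos hu hlt
  · left
    rw [← regret_minimaxProb_left hl.le]
    exact strictMono_regret_of_neg hl hgt

end Regret

/-- For `l < 0 < u` and every deterministic decision `d ∈ {−1,1}`, the worst-case
regret `−l·u/(u−l)` of the randomized minimax rule is strictly smaller than the
worst-case regret `sup_{c ∈ [l,u]} (max(c,0) − c·I{d=1})` of `d`. -/
theorem stmt_6 (l u : ℝ) (hl : l < 0) (hu : 0 < u) :
    ∀ d : ℤ, d = -1 ∨ d = 1 →
      -l * u / (u - l) <
        sSup ((fun c => max c 0 - c * (if d = 1 then (1:ℝ) else 0)) '' Set.Icc l u) := by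
  intro d _
  obtain ⟨hpos, hlt_one⟩ := minimaxProb_mem_Ioo hl hu
  have hdet : (if d = 1 then (1 : ℝ) else 0) ≠ minimaxProb l u := by
    split_ifs
    exacts [hlt_one.ne', hpos.ne]
  rw [← worstCaseRegret_minimaxProb hl hu.le]
  exact stmt_6_general hl hu hdet
end

section
/- Let l₋₁ ≤ u₋₁ and l₁ ≤ u₁ be real numbers, set L = l₁ − u₋₁ and U = u₁ − l₋₁, and for d ∈ {−1,1} define P(d) = L·I{d=1} + l₋₁ and Q(d) = −U·I{d=−1} + l₁. Fix α ∈ [0,1] and the preference weight w(d) = α·I{P(d) > Q(d)} + (1−α)·I{P(d) < Q(d)}. Then [(1−w(1))P(1) + w(1)Q(1)] − [(1−w(−1))P(−1) + w(−1)Q(−1)] = [(1−α)l₁ + αu₁] − [(1−α)l₋₁ + αu₋₁]; hence the maximizing decision is d = 1 if (1−α)l₁ + αu₁ > (1−α)l₋₁ + αu₋₁ and d = −1 if the reverse strict inequality holds (the Hurwicz criterion rule with index α). -/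
/-- `P(d) = L·I{d=1} + l₋₁` with `L = l₁ − u₋₁`. -/
def P (lm1 um1 l1 u1 : ℝ) (d : ℤ) : ℝ :=
  (l1 - um1) * (if d = 1 then 1 else 0) + lm1

/-- `Q(d) = −U·I{d=−1} + l₁` with `U = u₁ − l₋₁`. -/
def Q (lm1 um1 l1 u1 : ℝ) (d : ℤ) : ℝ :=
  -(u1 - lm1) * (if d = -1 then 1 else 0) + l1

/-- The Hurwicz weight `w(d) = α·I{P(d) > Q(d)} + (1−α)·I{P(d) < Q(d)}`. -/
noncomputable def wHurwicz (α lm1 um1 l1 u1 : ℝ) (d : ℤ) : ℝ :=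
  α * (if P lm1 um1 l1 u1 d > Q lm1 um1 l1 u1 d then 1 else 0)
    + (1 - α) * (if P lm1 um1 l1 u1 d < Q lm1 um1 l1 u1 d then 1 else 0)

/-- The lower-bound objective with the Hurwicz weight. -/
noncomputable def objHurwicz (α lm1 um1 l1 u1 : ℝ) (d : ℤ) : ℝ :=
  (1 - wHurwicz α lm1 um1 l1 u1 d) * P lm1 um1 l1 u1 d
    + wHurwicz α lm1 um1 l1 u1 d * Q lm1 um1 l1 u1 d

/-! The Hurwicz weight puts mass `α` on the smaller and `1 - α` on the larger of `P d` and `Q d`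
(on a tie every weight gives the common value). Because `lm1 ≤ um1` and `l1 ≤ u1`, the larger one
is `Q 1 = l1` at `d = 1` and `P (-1) = lm1` at `d = -1`, so each decision is worth the lower bound
of its own outcome minus `α` times the width of the interval of the other outcome. -/

theorem hurwiczWeight_combination_eq_min_max {R : Type*} [CommRing R] [LinearOrder R] (α a b : R) :
    (1 - (α * (if a > b then 1 else 0) + (1 - α) * (if a < b then 1 else 0))) * a
        + (α * (if a > b then 1 else 0) + (1 - α) * (if a < b then 1 else 0)) * b
      = α * min a b + (1 - α) * max a b := by
  rcases lt_trichotomy a b with hlt | rfl | hgt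
  · rw [if_neg hlt.not_gt, if_pos hlt, min_eq_left hlt.le, max_eq_right hlt.le]
    ring
  · rw [min_self, max_self]
    ring
  · rw [if_pos hgt, if_neg hgt.not_gt, min_eq_right hgt.le, max_eq_left hgt.le]
    ring

theorem objHurwicz_eq_min_max (α lm1 um1 l1 u1 : ℝ) (d : ℤ) :
    objHurwicz α lm1 um1 l1 u1 d
      = α * min (P lm1 um1 l1 u1 d) (Q lm1 um1 l1 u1 d)
        + (1 - α) * max (P lm1 um1 l1 u1 d) (Q lm1 um1 l1 u1 d) :=
  hurwiczWeight_combination_eq_min_max α _ _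

theorem P_one (lm1 um1 l1 u1 : ℝ) : P lm1 um1 l1 u1 1 = l1 - (um1 - lm1) := by
  rw [P, if_pos rfl]
  ring

theorem Q_one (lm1 um1 l1 u1 : ℝ) : Q lm1 um1 l1 u1 1 = l1 := by
  norm_num [Q]

theorem P_neg_one (lm1 um1 l1 u1 : ℝ) : P lm1 um1 l1 u1 (-1) = lm1 := by
  norm_num [P]

theorem Q_neg_one (lm1 um1 l1 u1 : ℝ) : Q lm1 um1 l1 u1 (-1) = lm1 - (u1 - l1) := by
  rw [Q, if_pos rfl]
  ring

theorem objHurwicz_one (α l1 u1 : ℝ) {lm1 um1 : ℝ} (h : lm1 ≤ um1) :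
    objHurwicz α lm1 um1 l1 u1 1 = l1 - α * (um1 - lm1) := by
  have hPQ : l1 - (um1 - lm1) ≤ l1 := sub_le_self _ (sub_nonneg.mpr h)
  rw [objHurwicz_eq_min_max, P_one, Q_one, min_eq_left hPQ, max_eq_right hPQ]
  ring

theorem objHurwicz_neg_one (α lm1 um1 : ℝ) {l1 u1 : ℝ} (h : l1 ≤ u1) :
    objHurwicz α lm1 um1 l1 u1 (-1) = lm1 - α * (u1 - l1) := by
  have hQP : lm1 - (u1 - l1) ≤ lm1 := sub_le_self _ (sub_nonneg.mpr h)
  rw [objHurwicz_eq_min_max, P_neg_one, Q_neg_one, min_eq_right hQP, max_eq_left hQP]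
  ring

theorem stmt_12_general (lm1 um1 l1 u1 α : ℝ) (h1 : lm1 ≤ um1) (h2 : l1 ≤ u1) :
    objHurwicz α lm1 um1 l1 u1 1 - objHurwicz α lm1 um1 l1 u1 (-1)
      = ((1 - α) * l1 + α * u1) - ((1 - α) * lm1 + α * um1)
    ∧ ((1 - α) * lm1 + α * um1 < (1 - α) * l1 + α * u1 →
        objHurwicz α lm1 um1 l1 u1 (-1) < objHurwicz α lm1 um1 l1 u1 1)
    ∧ ((1 - α) * l1 + α * u1 < (1 - α) * lm1 + α * um1 →
        objHurwicz α lm1 um1 l1 u1 1 < objHurwicz α lm1 um1 l1 u1 (-1)) := by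
  have value_sub_eq : objHurwicz α lm1 um1 l1 u1 1 - objHurwicz α lm1 um1 l1 u1 (-1)
      = ((1 - α) * l1 + α * u1) - ((1 - α) * lm1 + α * um1) := by
    rw [objHurwicz_one α l1 u1 h1, objHurwicz_neg_one α lm1 um1 h2]
    ring
  refine ⟨value_sub_eq, fun index_lt => ?_, fun index_lt => ?_⟩
  · rwa [← sub_pos, value_sub_eq, sub_pos]
  · rwa [← sub_neg, value_sub_eq, sub_neg]

/-- Hurwicz criterion row of Table 1: with weight
`w(d) = α·I{P(d) > Q(d)} + (1−α)·I{P(d) < Q(d)}`, the difference of the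
lower-bound objective between `d = 1` and `d = −1` equals
`[(1−α)l₁ + αu₁] − [(1−α)l₋₁ + αu₋₁]`; hence the maximizing decision is `d = 1`
if `(1−α)l₁ + αu₁ > (1−α)l₋₁ + αu₋₁` and `d = −1` under the reverse strict
inequality. -/
theorem stmt_12 (lm1 um1 l1 u1 α : ℝ) (h1 : lm1 ≤ um1) (h2 : l1 ≤ u1)
    (hα : α ∈ Set.Icc (0:ℝ) 1) :
    objHurwicz α lm1 um1 l1 u1 1 - objHurwicz α lm1 um1 l1 u1 (-1)
      = ((1 - α) * l1 + α * u1) - ((1 - α) * lm1 + α * um1)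
    ∧ ((1 - α) * lm1 + α * um1 < (1 - α) * l1 + α * u1 →
        objHurwicz α lm1 um1 l1 u1 (-1) < objHurwicz α lm1 um1 l1 u1 1)
    ∧ ((1 - α) * l1 + α * u1 < (1 - α) * lm1 + α * um1 →
        objHurwicz α lm1 um1 l1 u1 1 < objHurwicz α lm1 um1 l1 u1 (-1)) :=
  stmt_12_general lm1 um1 l1 u1 α h1 h2
end
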